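/- Fix an integer d ≥ 1, p ∈ (1,∞), a penalty function φ, and let (μ_t)_{t≥0} be a convolution semigroup in 𝒫_p(ℝ^d). Then for every f, g ∈ C₀(ℝ^d), t ≥ 0, and n ∈ ℕ: (i) 𝒮^{n+1}(t)f(x) ≤ 𝒮^n(t)f(x) for all x ∈ ℝ^d; (ii) ‖𝒮^n(t)f − 𝒮^n(t)g‖_∞ ≤ ‖f − g‖_∞; (iii) for all ε, δ > 0, if |f(x) − f(y)| ≤ ε whenever |x − y| ≤ δ, then |𝒮^n(t)f(x) − 𝒮^n(t)f(y)| ≤ ε whenever |x − y| ≤ δ. -/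

import Mathlib

open MeasureTheory Filter Topology ENNReal NNReal Set ZeroAtInfty
noncomputable section

/-- Euclidean space ℝ^d. -/
abbrev Ed (d : ℕ) := EuclideanSpace ℝ (Fin d)

/-- `𝒫_p(ℝ^d)`: Borel probability measures with finite `p`-th moment. -/
def MemPp {d : ℕ} (p : ℝ) (μ : Measure (Ed d)) : Prop :=
  IsProbabilityMeasure μ ∧ ∫⁻ x, (‖x‖₊ : ℝ≥0∞) ^ p ∂μ < ∞

/-- `γ` is a coupling of `μ` and `ν`. -/
def IsCoupling {d : ℕ} (γ : Measure (Ed d × Ed d)) (μ ν : Measure (Ed d)) : Prop :=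
  γ.map Prod.fst = μ ∧ γ.map Prod.snd = ν

/-- The `p`-Wasserstein distance `𝒲_p(μ, ν)`. -/
def Wp {d : ℕ} (p : ℝ) (μ ν : Measure (Ed d)) : ℝ :=
  (⨅ γ ∈ {γ : Measure (Ed d × Ed d) | IsCoupling γ μ ν},
    (∫⁻ q, (‖q.2 - q.1‖₊ : ℝ≥0∞) ^ p ∂γ) ^ (1 / p)).toReal

/-- The scaled penalty `φ_t(r) = t·φ(r/t)` for `t > 0`; `φ_0(0) = 0`, `φ_0(r) = ∞` for `r > 0`. -/
def phit (φ : ℝ≥0 → ℝ≥0∞) (t : ℝ) (r : ℝ≥0) : ℝ≥0∞ :=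
  if 0 < t then (t.toNNReal : ℝ≥0∞) * φ (r / t.toNNReal) else (if r = 0 then 0 else ∞)

/-- `φ` is a penalty function: lower semicontinuous, convex, increasing, not constant,
`φ(0) = 0`, and `x ↦ φ(x^{1/p})` is convex. -/
structure IsPenalty (p : ℝ) (φ : ℝ≥0 → ℝ≥0∞) : Prop where
  lsc : LowerSemicontinuous φ
  convex : ∀ a b l m : ℝ≥0, l + m = 1 →
    φ (l * a + m * b) ≤ (l : ℝ≥0∞) * φ a + (m : ℝ≥0∞) * φ b
  mono : Monotone φ
  not_const : ∃ a b, φ a ≠ φ b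
  map_zero : φ 0 = 0
  convex_rpow : ∀ a b l m : ℝ≥0, l + m = 1 →
    φ ((l * a + m * b) ^ (1 / p)) ≤ (l : ℝ≥0∞) * φ (a ^ (1 / p)) + (m : ℝ≥0∞) * φ (b ^ (1 / p))

/-- The convex conjugate `φ*(y) = sup_{x ≥ 0} (xy − φ(x))`. -/
def phiStar (φ : ℝ≥0 → ℝ≥0∞) (y : ℝ≥0) : ℝ≥0∞ :=
  ⨆ x : ℝ≥0, ((x * y : ℝ≥0) : ℝ≥0∞) - φ x

/-- The one-step operator `S(t)f(x) = sup_ν ( ∫ f(x+y) ν(dy) − φ_t(𝒲_p(μ_t, ν)) )`. -/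
def Sop {d : ℕ} (p : ℝ) (φ : ℝ≥0 → ℝ≥0∞) (μt : Measure (Ed d)) (t : ℝ)
    (f : Ed d → ℝ) (x : Ed d) : ℝ :=
  sSup { r : ℝ | ∃ ν : Measure (Ed d), MemPp p ν ∧ ∃ c : ℝ, 0 ≤ c ∧
    phit φ t (Wp p μt ν).toNNReal ≤ ENNReal.ofReal c ∧ r = (∫ y, f (x + y) ∂ν) - c }

/-- The iterated operator `𝒮ⁿ(t) = S(2⁻ⁿ)^{∘ k} ∘ S(t − k·2⁻ⁿ)`, `k = ⌊2ⁿ t⌋`. -/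
def SiterN {d : ℕ} (p : ℝ) (φ : ℝ≥0 → ℝ≥0∞) (μ : ℝ → Measure (Ed d)) (n : ℕ) (t : ℝ)
    (f : Ed d → ℝ) : Ed d → ℝ :=
  (fun g => Sop p φ (μ ((2 : ℝ) ^ n)⁻¹) ((2 : ℝ) ^ n)⁻¹ g)^[⌊(2:ℝ)^n * t⌋₊]
    (Sop p φ (μ (t - ⌊(2:ℝ)^n * t⌋₊ * ((2:ℝ)^n)⁻¹)) (t - ⌊(2:ℝ)^n * t⌋₊ * ((2:ℝ)^n)⁻¹) f)

/-- The limiting operator `𝒮(t)f = lim_n 𝒮ⁿ(t)f` (a decreasing limit, i.e. an infimum). -/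
def Slim {d : ℕ} (p : ℝ) (φ : ℝ≥0 → ℝ≥0∞) (μ : ℝ → Measure (Ed d)) (t : ℝ)
    (f : Ed d → ℝ) (x : Ed d) : ℝ :=
  ⨅ n : ℕ, SiterN p φ μ n t f x

/-- `f ∈ C₀(ℝ^d)`: continuous and vanishing at infinity. -/
def IsC0 {d : ℕ} (f : Ed d → ℝ) : Prop :=
  Continuous f ∧ Tendsto f (cocompact (Ed d)) (𝓝 0)

/-- `(μ_t)_{t ≥ 0}` is a convolution semigroup in `𝒫_p(ℝ^d)`. -/
def IsConvSemigroup {d : ℕ} (p : ℝ) (μ : ℝ → Measure (Ed d)) : Prop :=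
  μ 0 = Measure.dirac 0 ∧ (∀ s t : ℝ, 0 ≤ s → 0 ≤ t → μ (s + t) = (μ s).conv (μ t)) ∧
    ∀ t : ℝ, 0 ≤ t → MemPp p (μ t)

/-- `𝒲_p(μ_t, δ_0) → 0` as `t ↓ 0`. -/
def WContinuousAtZero {d : ℕ} (p : ℝ) (μ : ℝ → Measure (Ed d)) : Prop :=
  Tendsto (fun t => Wp p (μ t) (Measure.dirac 0)) (𝓝[>] (0:ℝ)) (𝓝 0)

/-- The semigroup of the underlying Lévy process, `S^μ(t)f(x) = ∫ f(x+y) μ_t(dy)`. -/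
def Smu {d : ℕ} (μ : ℝ → Measure (Ed d)) (t : ℝ) (f : Ed d → ℝ) (x : Ed d) : ℝ :=
  ∫ y, f (x + y) ∂(μ t)

/-- `f ∈ D(A^μ)` with `A^μ f = Af`: `(S^μ(t)f − f)/t → Af` uniformly as `t ↓ 0`. -/
def HasGenerator {d : ℕ} (μ : ℝ → Measure (Ed d)) (f Af : Ed d → ℝ) : Prop :=
  TendstoUniformly (fun t x => (Smu μ t f x - f x) / t) Af (𝓝[>] (0:ℝ))

/-- `f ∈ C₀¹(ℝ^d)`: continuously differentiable, vanishing at infinity, with gradient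
vanishing at infinity. -/
def IsC01 {d : ℕ} (f : Ed d → ℝ) : Prop :=
  IsC0 f ∧ ContDiff ℝ 1 f ∧ Tendsto (fun x => gradient f x) (cocompact (Ed d)) (𝓝 0)


/-- The (extended) Wasserstein distance. -/
def eW {d : ℕ} (p : ℝ) (μ ν : Measure (Ed d)) : ℝ≥0∞ :=
  ⨅ γ ∈ {γ : Measure (Ed d × Ed d) | IsCoupling γ μ ν},
    (∫⁻ q, (‖q.2 - q.1‖₊ : ℝ≥0∞) ^ p ∂γ) ^ (1 / p)

lemma eW_le {d : ℕ} {p : ℝ} {μ ν : Measure (Ed d)} {γ : Measure (Ed d × Ed d)}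
    (h : IsCoupling γ μ ν) : eW p μ ν ≤ (∫⁻ q, (‖q.2 - q.1‖₊ : ℝ≥0∞) ^ p ∂γ) ^ (1 / p) :=
  iInf₂_le (f := fun (γ : Measure (Ed d × Ed d)) (_ : γ ∈ {γ | IsCoupling γ μ ν}) =>
    (∫⁻ q, (‖q.2 - q.1‖₊ : ℝ≥0∞) ^ p ∂γ) ^ (1 / p)) γ h

lemma exists_coupling {d : ℕ} {p : ℝ} {μ ν : Measure (Ed d)} {r : ℝ≥0∞} (h : eW p μ ν < r) :
    ∃ γ, IsCoupling γ μ ν ∧ (∫⁻ q, (‖q.2 - q.1‖₊ : ℝ≥0∞) ^ p ∂γ) ^ (1 / p) < r := by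
  unfold eW at h
  simp only [iInf_lt_iff] at h
  obtain ⟨γ, h1, h2⟩ := h
  exact ⟨γ, h1, h2⟩

lemma IsCoupling.prob {d : ℕ} {μ ν : Measure (Ed d)} {γ : Measure (Ed d × Ed d)}
    (h : IsCoupling γ μ ν) (hμ : IsProbabilityMeasure μ) : IsProbabilityMeasure γ := by
  constructor
  have := hμ.measure_univ
  rw [← h.1, Measure.map_apply measurable_fst MeasurableSet.univ] at this
  simpa using this

lemma eW_self {d : ℕ} {p : ℝ} (hp : 1 < p) (μ : Measure (Ed d)) : eW p μ μ = 0 := by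
  have hc : IsCoupling (μ.map (fun x => (x, x))) μ μ := by
    constructor
    · rw [Measure.map_map measurable_fst (by fun_prop)]
      exact Measure.map_id
    · rw [Measure.map_map measurable_snd (by fun_prop)]
      exact Measure.map_id
  refine le_antisymm ((eW_le hc).trans ?_) bot_le
  rw [lintegral_map (by fun_prop) (by fun_prop)]
  have h1 : 0 < p := by linarith
  simp [h1]

lemma eW_lt_top {d : ℕ} {p : ℝ} (hp : 1 < p) {μ ν : Measure (Ed d)} (hμ : MemPp p μ)
    (hν : MemPp p ν) : eW p μ ν < ∞ := by
  have := hμ.1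
  have := hν.1
  have hc : IsCoupling (μ.prod ν) μ ν := by
    constructor
    · simp [Measure.map_fst_prod]
    · simp [Measure.map_snd_prod]
  refine (eW_le hc).trans_lt ?_
  refine ENNReal.rpow_lt_top_of_nonneg (by positivity) (ne_of_lt ?_)
  have h1 : ∫⁻ q, (‖q.1‖₊ : ℝ≥0∞) ^ p ∂(μ.prod ν) < ∞ := by
    have e : ∫⁻ q, (‖q.1‖₊ : ℝ≥0∞) ^ p ∂(μ.prod ν)
        = ∫⁻ x, (‖x‖₊ : ℝ≥0∞) ^ p ∂((μ.prod ν).map Prod.fst) := by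
      rw [lintegral_map (by fun_prop) (by fun_prop)]
    rw [e, hc.1]; exact hμ.2
  have h2 : ∫⁻ q, (‖q.2‖₊ : ℝ≥0∞) ^ p ∂(μ.prod ν) < ∞ := by
    have e : ∫⁻ q, (‖q.2‖₊ : ℝ≥0∞) ^ p ∂(μ.prod ν)
        = ∫⁻ x, (‖x‖₊ : ℝ≥0∞) ^ p ∂((μ.prod ν).map Prod.snd) := by
      rw [lintegral_map (by fun_prop) (by fun_prop)]
    rw [e, hc.2]; exact hν.2
  have h3 := ENNReal.lintegral_rpow_add_lt_top_of_lintegral_rpow_lt_top (μ := μ.prod ν)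
    (f := fun q : Ed d × Ed d => (‖q.2‖₊ : ℝ≥0∞)) (g := fun q => (‖q.1‖₊ : ℝ≥0∞))
    (by fun_prop) h2 h1 hp.le
  refine (lintegral_mono fun q => ?_).trans_lt h3
  refine ENNReal.rpow_le_rpow ?_ (by linarith)
  simp only [Pi.add_apply]
  exact_mod_cast nnnorm_sub_le q.2 q.1

/-- Mixture of products. -/
def mixP {ι α β : Type*} [MeasurableSpace α] [MeasurableSpace β] (I : Finset ι) (γ : Measure α)
    (A : ι → Set α) (G : ι → Measure β) : Measure (α × β) :=
  ∑ i ∈ I, (γ.restrict (A i)).prod (G i)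

lemma lintegral_mixP {ι α β : Type*} [MeasurableSpace α] [MeasurableSpace β] (I : Finset ι)
    (γ : Measure α) (A : ι → Set α) (G : ι → Measure β) [∀ i, SFinite (G i)]
    {f : α × β → ℝ≥0∞} (hf : Measurable f) :
    ∫⁻ z, f z ∂(mixP I γ A G) = ∑ i ∈ I, ∫⁻ x in A i, ∫⁻ y, f (x, y) ∂(G i) ∂γ := by
  unfold mixP
  rw [lintegral_finsetSum_measure]
  refine Finset.sum_congr rfl fun i _ => ?_
  rw [lintegral_prod _ hf.aemeasurable]

lemma sum_restrict_fiber {α β : Type*} [MeasurableSpace α] [MeasurableSpace β]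
    (σ : SimpleFunc β β) (ρ : Measure α) {h : α → β} (hh : Measurable h) :
    ∑ v ∈ σ.range, ρ.restrict (h ⁻¹' (σ ⁻¹' {v})) = ρ := by
  ext s hs
  rw [Measure.finsetSum_apply]
  have : ∀ v, ρ.restrict (h ⁻¹' (σ ⁻¹' {v})) s = ρ.restrict s ((σ.comp h hh) ⁻¹' {v}) := by
    intro v
    rw [Measure.restrict_apply hs, Measure.restrict_apply (SimpleFunc.measurableSet_fiber _ _),
      Set.inter_comm]
    rfl
  simp only [this]
  rw [SimpleFunc.sum_measure_preimage_singleton]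
  have : (σ.comp h hh) ⁻¹' (σ.range : Set β) = univ := by
    ext x; simp
  rw [this]; simp

lemma lintegral_sum_fiber {α β : Type*} [MeasurableSpace α] [MeasurableSpace β]
    (σ : SimpleFunc β β) (ρ : Measure α) {h : α → β} (hh : Measurable h) (f : α → ℝ≥0∞) :
    ∑ v ∈ σ.range, ∫⁻ x in h ⁻¹' (σ ⁻¹' {v}), f x ∂ρ = ∫⁻ x, f x ∂ρ := by
  rw [← lintegral_finsetSum_measure, sum_restrict_fiber σ ρ hh]

/-- The mixture `∑ (ν|A_v) ∗ κ_v`. -/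
def mix {d : ℕ} (σ : SimpleFunc (Ed d) (Ed d)) (ν : Measure (Ed d)) (κ : Ed d → Measure (Ed d)) :
    Measure (Ed d) :=
  (mixP σ.range ν (fun v => σ ⁻¹' {v}) κ).map (fun z => z.1 + z.2)

lemma eW_mix_le_aux {d : ℕ} {p : ℝ} (hp : 1 < p) (σ : SimpleFunc (Ed d) (Ed d))
    {μ₁ μ₂ ν : Measure (Ed d)} {κ : Ed d → Measure (Ed d)}
    (hμ₁ : IsProbabilityMeasure μ₁) (hμ₂ : IsProbabilityMeasure μ₂)
    (hκ : ∀ v, IsProbabilityMeasure (κ v))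
    {γ : Measure (Ed d × Ed d)} {G : Ed d → Measure (Ed d × Ed d)}
    (hγ : IsCoupling γ μ₁ ν) (hG : ∀ v, IsCoupling (G v) μ₂ (κ v)) :
    eW p (μ₁.conv μ₂) (mix σ ν κ) ≤ (∫⁻ q, (‖q.2 - q.1‖₊ : ℝ≥0∞) ^ p ∂γ) ^ (1 / p) +
      (∑ v ∈ σ.range, ν (σ ⁻¹' {v}) * ∫⁻ q, (‖q.2 - q.1‖₊ : ℝ≥0∞) ^ p ∂(G v)) ^ (1 / p) := by
  have hγp := hγ.prob hμ₁
  have hGp := fun v => (hG v).prob hμ₂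
  have hA : ∀ v, MeasurableSet (σ ⁻¹' {v}) := fun v => σ.measurableSet_fiber v
  set A : Ed d → Set (Ed d × Ed d) := fun v => Prod.snd ⁻¹' (σ ⁻¹' {v}) with hAdef
  set P := mixP σ.range γ A G with hP
  have hc : IsCoupling (P.map (fun z => z.1 + z.2)) (μ₁.conv μ₂) (mix σ ν κ) := by
    constructor
    · refine Measure.ext_of_lintegral _ fun f hf => ?_
      rw [lintegral_map hf measurable_fst, lintegral_map (by fun_prop) (by fun_prop),
        lintegral_mixP _ _ _ _ (by fun_prop), Measure.lintegral_conv hf, ← hγ.1,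
        lintegral_map (by fun_prop) measurable_fst, ← lintegral_sum_fiber σ γ measurable_snd]
      refine Finset.sum_congr rfl fun v _ => lintegral_congr fun q => ?_
      rw [← (hG v).1, lintegral_map (by fun_prop) measurable_fst]
      rfl
    · refine Measure.ext_of_lintegral _ fun f hf => ?_
      rw [lintegral_map hf measurable_snd, lintegral_map (by fun_prop) (by fun_prop),
        lintegral_mixP _ _ _ _ (by fun_prop), mix, lintegral_map hf (by fun_prop),
        lintegral_mixP _ _ _ _ (by fun_prop)]
      refine Finset.sum_congr rfl fun v _ => ?_
      have hm : Measurable fun y : Ed d => ∫⁻ z, f (y + z) ∂(κ v) :=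
        Measurable.lintegral_prod_right' (f := fun w : Ed d × Ed d => f (w.1 + w.2)) (by fun_prop)
      dsimp only
      rw [← hγ.2, setLIntegral_map (hA v) hm measurable_snd]
      refine lintegral_congr fun q => ?_
      rw [← (hG v).2, lintegral_map (by fun_prop) measurable_snd]
      rfl
  refine (eW_le hc).trans ?_
  rw [lintegral_map (by fun_prop) (by fun_prop)]
  have hp0 : 0 ≤ p := by linarith
  have h1 : (∫⁻ z, (‖z.1.2 - z.1.1‖₊ : ℝ≥0∞) ^ p ∂P) = ∫⁻ q, (‖q.2 - q.1‖₊ : ℝ≥0∞) ^ p ∂γ := by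
    rw [lintegral_mixP _ _ _ _ (by fun_prop)]
    simp only [lintegral_const, measure_univ, mul_one]
    exact lintegral_sum_fiber σ γ measurable_snd _
  have h2 : (∫⁻ z, (‖z.2.2 - z.2.1‖₊ : ℝ≥0∞) ^ p ∂P) =
      ∑ v ∈ σ.range, ν (σ ⁻¹' {v}) * ∫⁻ q, (‖q.2 - q.1‖₊ : ℝ≥0∞) ^ p ∂(G v) := by
    rw [lintegral_mixP _ _ _ _ (by fun_prop)]
    refine Finset.sum_congr rfl fun v _ => ?_
    dsimp only
    rw [setLIntegral_const, mul_comm, ← hγ.2, Measure.map_apply measurable_snd (hA v)]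
  rw [← h1, ← h2]
  refine le_trans ?_ (ENNReal.lintegral_Lp_add_le (by fun_prop) (by fun_prop) hp.le)
  refine ENNReal.rpow_le_rpow (lintegral_mono fun z => ENNReal.rpow_le_rpow ?_ hp0) (by positivity)
  simp only [Pi.add_apply, Prod.fst_add, Prod.snd_add]
  rw [add_sub_add_comm]
  exact_mod_cast nnnorm_add_le _ _

lemma eW_mix_le {d : ℕ} {p : ℝ} (hp : 1 < p) (σ : SimpleFunc (Ed d) (Ed d))
    {μ₁ μ₂ ν : Measure (Ed d)} {κ : Ed d → Measure (Ed d)}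
    (hμ₁ : MemPp p μ₁) (hμ₂ : MemPp p μ₂) (hν : MemPp p ν)
    (hκ : ∀ v, MemPp p (κ v)) :
    eW p (μ₁.conv μ₂) (mix σ ν κ) ≤ eW p μ₁ ν +
      (∑ v ∈ σ.range, ν (σ ⁻¹' {v}) * (eW p μ₂ (κ v)) ^ p) ^ (1 / p) := by
  have hp0 : 0 < p := by linarith
  have := hν.1
  have hle : ∀ ε : ℝ≥0, 0 < ε → eW p (μ₁.conv μ₂) (mix σ ν κ) ≤ (eW p μ₁ ν + ε) +
      (∑ v ∈ σ.range, ν (σ ⁻¹' {v}) * (eW p μ₂ (κ v) + ε) ^ p) ^ (1 / p) := by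
    intro ε hε
    have hε' : (ε : ℝ≥0∞) ≠ 0 := by exact_mod_cast hε.ne'
    obtain ⟨γ, hγ, hγ'⟩ := exists_coupling (ENNReal.lt_add_right (eW_lt_top hp hμ₁ hν).ne hε')
    have := fun v => exists_coupling (ENNReal.lt_add_right (eW_lt_top hp hμ₂ (hκ v)).ne hε')
    choose G hG hG' using this
    refine (eW_mix_le_aux hp σ hμ₁.1 hμ₂.1 (fun v => (hκ v).1) hγ hG).trans ?_
    gcongr with v hv
    have := ENNReal.rpow_le_rpow (hG' v).le hp0.le
    rwa [← ENNReal.rpow_mul, one_div_mul_cancel hp0.ne', ENNReal.rpow_one] at this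
  have hcont : Continuous fun ε : ℝ≥0 => (eW p μ₁ ν + ε) +
      (∑ v ∈ σ.range, ν (σ ⁻¹' {v}) * (eW p μ₂ (κ v) + ε) ^ p) ^ (1 / p) := by
    refine (continuous_const.add ENNReal.continuous_coe).add
      (ENNReal.continuous_rpow_const.comp (continuous_finsetSum _ fun v _ => ?_))
    exact (ENNReal.continuous_const_mul (measure_ne_top _ _)).comp
      (ENNReal.continuous_rpow_const.comp (continuous_const.add ENNReal.continuous_coe))
  have ht := (hcont.tendsto 0).mono_left (nhdsWithin_le_nhds (s := Ioi 0))
  simp only [ENNReal.coe_zero, add_zero] at ht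
  exact ge_of_tendsto ht (eventually_nhdsWithin_of_forall fun ε hε => hle ε hε)

lemma mix_prob {d : ℕ} (σ : SimpleFunc (Ed d) (Ed d))
    {ν : Measure (Ed d)} {κ : Ed d → Measure (Ed d)} (hν : IsProbabilityMeasure ν)
    (hκ : ∀ v, IsProbabilityMeasure (κ v)) : IsProbabilityMeasure (mix σ ν κ) := by
  constructor
  rw [← lintegral_one, mix, lintegral_map (by fun_prop) (by fun_prop),
    lintegral_mixP _ _ _ _ (by fun_prop)]
  simp only [lintegral_const, measure_univ, mul_one, one_mul]
  simp [σ.sum_range_measure_preimage_singleton]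

lemma mix_memPp {d : ℕ} {p : ℝ} (hp : 1 < p) (σ : SimpleFunc (Ed d) (Ed d))
    {ν : Measure (Ed d)} {κ : Ed d → Measure (Ed d)} (hν : MemPp p ν)
    (hκ : ∀ v, MemPp p (κ v)) : MemPp p (mix σ ν κ) := by
  have := hν.1
  have := fun v => (hκ v).1
  refine ⟨mix_prob σ hν.1 this, ?_⟩
  rw [mix, lintegral_map (by fun_prop) (by fun_prop)]
  have h1 : (∫⁻ z, (‖z.1‖₊ : ℝ≥0∞) ^ p ∂(mixP σ.range ν (fun v => σ ⁻¹' {v}) κ)) < ∞ := by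
    rw [lintegral_mixP _ _ _ _ (by fun_prop)]
    refine ENNReal.sum_lt_top.2 fun v _ => ?_
    simp only [lintegral_const, measure_univ, mul_one]
    exact (setLIntegral_le_lintegral _ _).trans_lt hν.2
  have h2 : (∫⁻ z, (‖z.2‖₊ : ℝ≥0∞) ^ p ∂(mixP σ.range ν (fun v => σ ⁻¹' {v}) κ)) < ∞ := by
    rw [lintegral_mixP _ _ _ _ (by fun_prop)]
    refine ENNReal.sum_lt_top.2 fun v _ => ?_
    dsimp only
    rw [setLIntegral_const]
    exact ENNReal.mul_lt_top (hκ v).2 (measure_lt_top _ _)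
  have h3 := ENNReal.lintegral_rpow_add_lt_top_of_lintegral_rpow_lt_top
    (f := fun q : Ed d × Ed d => (‖q.1‖₊ : ℝ≥0∞)) (g := fun q => (‖q.2‖₊ : ℝ≥0∞))
    (by fun_prop) h1 h2 hp.le
  refine (lintegral_mono fun q => ?_).trans_lt h3
  refine ENNReal.rpow_le_rpow ?_ (by linarith)
  simp only [Pi.add_apply]
  exact_mod_cast nnnorm_add_le q.1 q.2

lemma mix_integral {d : ℕ} (σ : SimpleFunc (Ed d) (Ed d))
    {ν : Measure (Ed d)} {κ : Ed d → Measure (Ed d)} (hν : IsProbabilityMeasure ν)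
    (hκ : ∀ v, IsProbabilityMeasure (κ v)) {f : Ed d → ℝ} (hf : Continuous f) {M : ℝ}
    (hM : ∀ x, |f x| ≤ M) :
    ∫ y, f y ∂(mix σ ν κ) = ∑ v ∈ σ.range, ∫ y in σ ⁻¹' {v}, ∫ z, f (y + z) ∂(κ v) ∂ν := by
  have hi : ∀ v, Integrable (fun z : Ed d × Ed d => f (z.1 + z.2))
      ((ν.restrict (σ ⁻¹' {v})).prod (κ v)) := fun v =>
    Integrable.of_bound (by fun_prop) M (ae_of_all _ fun z => by simpa using hM _)
  rw [mix, integral_map (by fun_prop) (by fun_prop), mixP,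
    integral_finsetSum_measure (fun v _ => hi v)]
  exact Finset.sum_congr rfl fun v _ => integral_prod _ (hi v)

lemma phit_mono {p : ℝ} {φ : ℝ≥0 → ℝ≥0∞} (hφ : IsPenalty p φ) (t : ℝ) : Monotone (phit φ t) := by
  intro a b hab
  unfold phit
  split_ifs with h1 h2 h3 h3
  · gcongr
    exact hφ.mono (by gcongr)
  · exact le_rfl
  · exact bot_le
  · exact absurd (le_antisymm (hab.trans h3.le) bot_le) h2
  · exact le_rfl

lemma phit_zero {p : ℝ} {φ : ℝ≥0 → ℝ≥0∞} (hφ : IsPenalty p φ) (t : ℝ) : phit φ t 0 = 0 := by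
  simp [phit, hφ.map_zero]

lemma phit_add {p : ℝ} {φ : ℝ≥0 → ℝ≥0∞} (hφ : IsPenalty p φ) {s t : ℝ} (hs : 0 < s) (ht : 0 ≤ t)
    (a b : ℝ≥0) : phit φ (s + t) (a + b) ≤ phit φ s a + phit φ t b := by
  rcases ht.eq_or_lt with rfl | ht
  · by_cases hb : b = 0
    · subst hb; simp [phit_zero hφ]
    · simp [phit, hb]
  · simp only [phit, hs, ht, add_pos hs ht, if_true]
    rw [Real.toNNReal_add hs.le ht.le]
    have hS : 0 < s.toNNReal := Real.toNNReal_pos.2 hs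
    have hT : 0 < t.toNNReal := Real.toNNReal_pos.2 ht
    generalize s.toNNReal = S at *
    generalize t.toNNReal = T at *
    have hST : S + T ≠ 0 := (add_pos hS hT).ne'
    have h := hφ.convex (a / S) (b / T) (S / (S + T)) (T / (S + T)) (by
      rw [← add_div, div_self hST])
    have e : S / (S + T) * (a / S) + T / (S + T) * (b / T) = (a + b) / (S + T) := by
      field_simp
    rw [e] at h
    calc ((S + T : ℝ≥0) : ℝ≥0∞) * φ ((a + b) / (S + T)) ≤ ((S + T : ℝ≥0) : ℝ≥0∞) *
          (((S / (S + T) : ℝ≥0) : ℝ≥0∞) * φ (a / S) + ((T / (S + T) : ℝ≥0) : ℝ≥0∞) * φ (b / T)) := by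
          gcongr
      _ = _ := by
          rw [mul_add, ← mul_assoc, ← mul_assoc, ← ENNReal.coe_mul, ← ENNReal.coe_mul,
            mul_div_cancel₀ _ hST, mul_div_cancel₀ _ hST]

lemma phit_convex {p : ℝ} (hp : 1 < p) {φ : ℝ≥0 → ℝ≥0∞} (hφ : IsPenalty p φ) (t : ℝ)
    (a b l m : ℝ≥0) (hlm : l + m = 1) :
    phit φ t ((l * a + m * b) ^ (1 / p)) ≤
      (l : ℝ≥0∞) * phit φ t (a ^ (1 / p)) + (m : ℝ≥0∞) * phit φ t (b ^ (1 / p)) := by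
  have hp0 : p ≠ 0 := by linarith
  have hip : 1 / p ≠ 0 := by positivity
  by_cases ht : 0 < t
  · simp only [phit, ht, if_true]
    have hT : 0 < t.toNNReal := Real.toNNReal_pos.2 ht
    generalize t.toNNReal = T at *
    have key : ∀ x : ℝ≥0, x ^ (1 / p) / T = (x / T ^ p) ^ (1 / p) := by
      intro x
      rw [NNReal.div_rpow, ← NNReal.rpow_mul, mul_one_div_cancel hp0, NNReal.rpow_one]
    rw [key, key, key]
    have h := hφ.convex_rpow (a / T ^ p) (b / T ^ p) l m hlm
    rw [add_div, mul_div_assoc, mul_div_assoc]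
    calc _ ≤ (T : ℝ≥0∞) * _ := mul_le_mul_right h _
      _ = _ := by ring
  · simp only [phit, ht, if_false, NNReal.rpow_eq_zero hip]
    by_cases h1 : l * a + m * b = 0
    · simp [h1]
    · rw [if_neg h1]
      by_cases h2 : l * a = 0
      · have h3 : m * b ≠ 0 := fun h => h1 (by rw [h2, h, add_zero])
        have hm : m ≠ 0 := left_ne_zero_of_mul h3
        simp [right_ne_zero_of_mul h3, ENNReal.mul_top, hm]
      · have hm : l ≠ 0 := left_ne_zero_of_mul h2
        simp [right_ne_zero_of_mul h2, ENNReal.mul_top, hm]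

lemma phit_jensen {p : ℝ} (hp : 1 < p) {φ : ℝ≥0 → ℝ≥0∞} (hφ : IsPenalty p φ) (t : ℝ)
    {ι : Type*} (I : Finset ι) (w b : ι → ℝ≥0) (c : ι → ℝ) (hw : ∑ i ∈ I, w i = 1)
    (hc0 : ∀ i, 0 ≤ c i) (hc : ∀ i, phit φ t (b i) ≤ ENNReal.ofReal (c i)) :
    phit φ t ((∑ i ∈ I, w i * b i ^ p) ^ (1 / p)) ≤ ENNReal.ofReal (∑ i ∈ I, w i * c i) := by
  have hp0 : p ≠ 0 := by linarith
  have hC : Convex ℝ {q : ℝ × ℝ | 0 ≤ q.1 ∧ 0 ≤ q.2 ∧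
      phit φ t (q.1.toNNReal ^ (1 / p)) ≤ ENNReal.ofReal q.2} := by
    rintro ⟨x, u⟩ ⟨hx, hu, hxu⟩ ⟨y, v⟩ ⟨hy, hv, hyv⟩ l m hl hm hlm
    simp only at hx hu hxu hy hv hyv
    refine ⟨by simp only [Prod.smul_mk, Prod.mk_add_mk, smul_eq_mul]; positivity,
      by simp only [Prod.smul_mk, Prod.mk_add_mk, smul_eq_mul]; positivity, ?_⟩
    simp only [Prod.smul_mk, Prod.mk_add_mk, smul_eq_mul]
    lift x to ℝ≥0 using hx
    lift y to ℝ≥0 using hy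
    lift l to ℝ≥0 using hl
    lift m to ℝ≥0 using hm
    lift u to ℝ≥0 using hu
    lift v to ℝ≥0 using hv
    have e : (l * x + m * y : ℝ).toNNReal = l * x + m * y := by
      rw [← NNReal.coe_mul, ← NNReal.coe_mul, ← NNReal.coe_add, Real.toNNReal_coe]
    have e2 : ENNReal.ofReal (l * u + m * v : ℝ) = l * u + m * v := by
      rw [← NNReal.coe_mul, ← NNReal.coe_mul, ← NNReal.coe_add, ENNReal.ofReal_coe_nnreal]
      push_cast; rfl
    rw [e, e2]
    simp only [Real.toNNReal_coe, ENNReal.ofReal_coe_nnreal] at hxu hyv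
    refine (phit_convex hp hφ t x y l m (by exact_mod_cast hlm)).trans ?_
    gcongr
  have := hC.sum_mem (t := I) (w := fun i => (w i : ℝ)) (z := fun i => (((b i ^ p : ℝ≥0) : ℝ), c i))
    (fun i _ => (w i).2) (by exact_mod_cast hw) (fun i _ => by
      refine ⟨NNReal.coe_nonneg _, hc0 i, ?_⟩
      rw [Real.toNNReal_coe, ← NNReal.rpow_mul, mul_one_div_cancel hp0, NNReal.rpow_one]
      exact hc i)
  have h2 := this.2.2
  simp only [Prod.fst_sum, Prod.snd_sum, Prod.smul_mk, smul_eq_mul] at h2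
  convert h2 using 3
  rw [← NNReal.coe_inj, Real.coe_toNNReal _ (by positivity)]
  push_cast
  rfl

lemma phit_mix {d : ℕ} {p : ℝ} (hp : 1 < p) {φ : ℝ≥0 → ℝ≥0∞} (hφ : IsPenalty p φ)
    {s t : ℝ} (hs : 0 < s) (ht : 0 ≤ t) (σ : SimpleFunc (Ed d) (Ed d))
    {μ₁ μ₂ ν : Measure (Ed d)} {κ : Ed d → Measure (Ed d)}
    (hμ₁ : MemPp p μ₁) (hμ₂ : MemPp p μ₂) (hν : MemPp p ν)
    (hκ : ∀ v, MemPp p (κ v)) {c : ℝ} (hc0 : 0 ≤ c)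
    (hc : phit φ s (Wp p μ₁ ν).toNNReal ≤ ENNReal.ofReal c) {C : Ed d → ℝ}
    (hC0 : ∀ v, 0 ≤ C v) (hC : ∀ v, phit φ t (Wp p μ₂ (κ v)).toNNReal ≤ ENNReal.ofReal (C v)) :
    phit φ (s + t) (Wp p (μ₁.conv μ₂) (mix σ ν κ)).toNNReal ≤
      ENNReal.ofReal (c + ∑ v ∈ σ.range, ν.real (σ ⁻¹' {v}) * C v) := by
  have hp0 : 0 < p := by linarith
  have := hν.1
  have hW : ∀ μ ν : Measure (Ed d), (Wp p μ ν).toNNReal = (eW p μ ν).toNNReal := by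
    intro μ ν
    change (eW p μ ν).toReal.toNNReal = _
    rw [ENNReal.toReal, Real.toNNReal_coe]
  simp only [hW] at hc hC ⊢
  set a := (eW p μ₁ ν).toNNReal with ha
  set b : Ed d → ℝ≥0 := fun v => (eW p μ₂ (κ v)).toNNReal with hb
  set w : Ed d → ℝ≥0 := fun v => (ν (σ ⁻¹' {v})).toNNReal with hw
  have ha' : eW p μ₁ ν = a := (ENNReal.coe_toNNReal (eW_lt_top hp hμ₁ hν).ne).symm
  have hb' : ∀ v, eW p μ₂ (κ v) = b v :=
    fun v => (ENNReal.coe_toNNReal (eW_lt_top hp hμ₂ (hκ v)).ne).symm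
  have hw' : ∀ v, ν (σ ⁻¹' {v}) = w v := fun v => (ENNReal.coe_toNNReal (measure_ne_top _ _)).symm
  have hw1 : ∑ v ∈ σ.range, w v = 1 := by
    have := σ.sum_range_measure_preimage_singleton ν
    simp only [hw', measure_univ] at this
    exact_mod_cast this
  have hle := eW_mix_le hp σ hμ₁ hμ₂ hν hκ
  simp only [ha', hb', hw'] at hle
  have e : (a : ℝ≥0∞) + (∑ v ∈ σ.range, (w v : ℝ≥0∞) * (b v : ℝ≥0∞) ^ p) ^ (1 / p)
      = ((a + (∑ v ∈ σ.range, w v * b v ^ p) ^ (1 / p) : ℝ≥0) : ℝ≥0∞) := by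
    rw [ENNReal.coe_add, ENNReal.coe_rpow_of_nonneg _ (by positivity), ENNReal.ofNNReal_finsetSum]
    simp only [ENNReal.coe_mul, ENNReal.coe_rpow_of_nonneg _ hp0.le]
  rw [e] at hle
  have hle2 : (eW p (μ₁.conv μ₂) (mix σ ν κ)).toNNReal ≤
      a + (∑ v ∈ σ.range, w v * b v ^ p) ^ (1 / p) :=
    ENNReal.toNNReal_mono ENNReal.coe_ne_top hle
  refine (phit_mono hφ _ hle2).trans ((phit_add hφ hs ht _ _).trans ?_)
  have hsum : ∑ v ∈ σ.range, ν.real (σ ⁻¹' {v}) * C v = ∑ v ∈ σ.range, (w v : ℝ) * C v := rfl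
  have hnn : 0 ≤ ∑ v ∈ σ.range, (w v : ℝ) * C v :=
    Finset.sum_nonneg fun v _ => mul_nonneg (w v).2 (hC0 v)
  rw [hsum, ENNReal.ofReal_add hc0 hnn]
  exact add_le_add hc (phit_jensen hp hφ t _ w b C hw1 hC0 hC)

/-- Bounded uniformly continuous functions. -/
def BUC {d : ℕ} (f : Ed d → ℝ) : Prop := UniformContinuous f ∧ ∃ M, ∀ x, |f x| ≤ M

/-- The set whose supremum defines `Sop`. -/
def SopSet {d : ℕ} (p : ℝ) (φ : ℝ≥0 → ℝ≥0∞) (μt : Measure (Ed d)) (t : ℝ)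
    (f : Ed d → ℝ) (x : Ed d) : Set ℝ :=
  { r : ℝ | ∃ ν : Measure (Ed d), MemPp p ν ∧ ∃ c : ℝ, 0 ≤ c ∧
    phit φ t (Wp p μt ν).toNNReal ≤ ENNReal.ofReal c ∧ r = (∫ y, f (x + y) ∂ν) - c }

lemma abs_integral_le {d : ℕ} {f : Ed d → ℝ} {M : ℝ} (hM : ∀ x, |f x| ≤ M) {ν : Measure (Ed d)}
    (hν : IsProbabilityMeasure ν) (x : Ed d) : |∫ y, f (x + y) ∂ν| ≤ M := by
  have := norm_integral_le_of_norm_le_const (μ := ν) (f := fun y => f (x + y)) (C := M)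
    (ae_of_all _ fun y => hM _)
  simpa using this

lemma SopSet_le {d : ℕ} {p : ℝ} {φ : ℝ≥0 → ℝ≥0∞} {μt : Measure (Ed d)} {t : ℝ}
    {f : Ed d → ℝ} {M : ℝ} (hM : ∀ x, |f x| ≤ M) {x : Ed d} {r : ℝ}
    (hr : r ∈ SopSet p φ μt t f x) : r ≤ M := by
  obtain ⟨ν, hν, c, hc, -, rfl⟩ := hr
  have := (abs_le.1 (abs_integral_le hM hν.1 x)).2
  linarith

lemma SopSet_bdd {d : ℕ} {p : ℝ} {φ : ℝ≥0 → ℝ≥0∞} {μt : Measure (Ed d)} {t : ℝ}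
    {f : Ed d → ℝ} (hf : BUC f) (x : Ed d) : BddAbove (SopSet p φ μt t f x) := by
  obtain ⟨M, hM⟩ := hf.2
  exact ⟨M, fun r hr => SopSet_le hM hr⟩

lemma SopSet_mem {d : ℕ} {p : ℝ} (hp : 1 < p) {φ : ℝ≥0 → ℝ≥0∞} (hφ : IsPenalty p φ)
    {μt : Measure (Ed d)} (hμ : MemPp p μt) (t : ℝ) (f : Ed d → ℝ) (x : Ed d) :
    (∫ y, f (x + y) ∂μt) ∈ SopSet p φ μt t f x := by
  refine ⟨μt, hμ, 0, le_rfl, ?_, by simp⟩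
  have : Wp p μt μt = 0 := by
    change (eW p μt μt).toReal = 0
    rw [eW_self hp]; rfl
  simp [this, phit_zero hφ]

lemma BUC.integrable {d : ℕ} {f : Ed d → ℝ} (hf : BUC f) (ν : Measure (Ed d))
    (hν : IsFiniteMeasure ν) (x : Ed d) : Integrable (fun y => f (x + y)) ν := by
  obtain ⟨M, hM⟩ := hf.2
  have := hf.1.continuous
  exact Integrable.of_bound (by fun_prop) M (ae_of_all _ fun y => hM _)

lemma Sop_le {d : ℕ} {p : ℝ} (hp : 1 < p) {φ : ℝ≥0 → ℝ≥0∞} (hφ : IsPenalty p φ)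
    {μt : Measure (Ed d)} (hμ : MemPp p μt) (t : ℝ) {f g : Ed d → ℝ} (hf : BUC f) (hg : BUC g)
    {x x' : Ed d} {C : ℝ} (h : ∀ z, f (x + z) ≤ g (x' + z) + C) :
    Sop p φ μt t f x ≤ Sop p φ μt t g x' + C := by
  refine csSup_le ⟨_, SopSet_mem hp hφ hμ t f x⟩ ?_
  rintro r ⟨ν, hν, c, hc, hc', rfl⟩
  have := hν.1
  have h1 : (∫ y, f (x + y) ∂ν) ≤ (∫ y, g (x' + y) ∂ν) + C := by
    have := integral_mono (hf.integrable ν inferInstance x)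
      ((hg.integrable ν inferInstance x').add (integrable_const C)) h
    simp only [Pi.add_apply] at this
    rw [integral_add (hg.integrable ν inferInstance x') (integrable_const C)] at this
    simpa using this
  have h2 : (∫ y, g (x' + y) ∂ν) - c ≤ Sop p φ μt t g x' :=
    le_csSup (SopSet_bdd hg x') ⟨ν, hν, c, hc, hc', rfl⟩
  linarith

lemma Sop_abs_le {d : ℕ} {p : ℝ} (hp : 1 < p) {φ : ℝ≥0 → ℝ≥0∞} (hφ : IsPenalty p φ)
    {μt : Measure (Ed d)} (hμ : MemPp p μt) (t : ℝ) {f : Ed d → ℝ} {M : ℝ}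
    (hM : ∀ x, |f x| ≤ M) (x : Ed d) : |Sop p φ μt t f x| ≤ M := by
  rw [abs_le]
  constructor
  · refine (abs_le.1 (abs_integral_le hM hμ.1 x)).1.trans
      (le_csSup ⟨M, fun r hr => SopSet_le hM hr⟩ (SopSet_mem hp hφ hμ t f x))
  · exact csSup_le ⟨_, SopSet_mem hp hφ hμ t f x⟩ fun r hr => SopSet_le hM hr

lemma Sop_modulus {d : ℕ} {p : ℝ} (hp : 1 < p) {φ : ℝ≥0 → ℝ≥0∞} (hφ : IsPenalty p φ)
    {μt : Measure (Ed d)} (hμ : MemPp p μt) (t : ℝ) {f : Ed d → ℝ} (hf : BUC f) {ε δ : ℝ}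
    (h : ∀ x y : Ed d, ‖x - y‖ ≤ δ → |f x - f y| ≤ ε) (x y : Ed d) (hxy : ‖x - y‖ ≤ δ) :
    |Sop p φ μt t f x - Sop p φ μt t f y| ≤ ε := by
  have h1 := Sop_le hp hφ hμ t hf hf (x := x) (x' := y) (C := ε) fun z => by
    have := (abs_le.1 (h (x + z) (y + z) (by simpa using hxy))).2
    linarith
  have h2 := Sop_le hp hφ hμ t hf hf (x := y) (x' := x) (C := ε) fun z => by
    have := (abs_le.1 (h (x + z) (y + z) (by simpa using hxy))).1
    linarith
  rw [abs_le]
  constructor <;> linarith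

lemma BUC.modulus {d : ℕ} {f : Ed d → ℝ} (hf : BUC f) {ε : ℝ} (hε : 0 < ε) :
    ∃ δ > 0, ∀ x y : Ed d, ‖x - y‖ ≤ δ → |f x - f y| ≤ ε := by
  obtain ⟨δ, hδ, h⟩ := Metric.uniformContinuous_iff.1 hf.1 ε hε
  refine ⟨δ / 2, by positivity, fun x y hxy => ?_⟩
  have := h (a := x) (b := y) (by rw [dist_eq_norm]; linarith)
  rw [Real.dist_eq] at this
  exact this.le

lemma BUC.Sop {d : ℕ} {p : ℝ} (hp : 1 < p) {φ : ℝ≥0 → ℝ≥0∞} (hφ : IsPenalty p φ)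
    {μt : Measure (Ed d)} (hμ : MemPp p μt) (t : ℝ) {f : Ed d → ℝ} (hf : BUC f) :
    BUC (Sop p φ μt t f) := by
  constructor
  · rw [Metric.uniformContinuous_iff]
    intro ε hε
    obtain ⟨δ, hδ, h⟩ := hf.modulus (half_pos hε)
    refine ⟨δ, hδ, fun x y hxy => ?_⟩
    have := Sop_modulus hp hφ hμ t hf h x y (by rw [← dist_eq_norm]; exact hxy.le)
    rw [Real.dist_eq]
    linarith
  · obtain ⟨M, hM⟩ := hf.2
    exact ⟨M, Sop_abs_le hp hφ hμ t hM⟩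

lemma integral_sum_fiber {d : ℕ} (σ : SimpleFunc (Ed d) (Ed d)) (ν : Measure (Ed d))
    {f : Ed d → ℝ} (hf : Integrable f ν) :
    ∑ v ∈ σ.range, ∫ x in σ ⁻¹' {v}, f x ∂ν = ∫ x, f x ∂ν := by
  rw [← integral_finsetSum_measure (fun v _ => hf.restrict)]
  congr 1
  exact sum_restrict_fiber σ ν measurable_id

lemma exists_simple {d : ℕ} (ν : Measure (Ed d)) (hν : IsProbabilityMeasure ν) {δ η : ℝ}
    (hδ : 0 < δ) (hη : 0 < η) : ∃ σ : SimpleFunc (Ed d) (Ed d), ν.real {y | δ ≤ dist (σ y) y} ≤ η := by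
  have h := tendstoInMeasure_of_tendsto_ae (μ := ν)
    (f := fun N y => SimpleFunc.nearestPt (TopologicalSpace.denseSeq (Ed d)) N y) (g := fun y => y)
    (fun N => (SimpleFunc.measurable _).aestronglyMeasurable)
    (ae_of_all _ fun y => SimpleFunc.tendsto_nearestPt
      (by rw [(TopologicalSpace.denseRange_denseSeq (Ed d)).closure_range]; trivial))
  rw [tendstoInMeasure_iff_dist] at h
  have h2 := (h δ hδ).eventually_le_const (u := ENNReal.ofReal η) (by simpa using hη)
  obtain ⟨N, hN⟩ := h2.exists
  exact ⟨_, ENNReal.toReal_le_of_le_ofReal hη.le hN⟩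

lemma Sop_comp {d : ℕ} {p : ℝ} (hp : 1 < p) {φ : ℝ≥0 → ℝ≥0∞} (hφ : IsPenalty p φ)
    {μs μt : Measure (Ed d)} (hμs : MemPp p μs) (hμt : MemPp p μt) {s t : ℝ} (hs : 0 < s)
    (ht : 0 ≤ t) {f : Ed d → ℝ} (hf : BUC f) (x : Ed d) :
    Sop p φ μs s (Sop p φ μt t f) x ≤ Sop p φ (μs.conv μt) (s + t) f x := by
  set F := Sop p φ μt t f with hF
  have hFB : BUC F := hf.Sop hp hφ hμt t
  refine csSup_le ⟨_, SopSet_mem hp hφ hμs s F x⟩ ?_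
  rintro r ⟨ν, hν, c, hc0, hc, rfl⟩
  have hνp := hν.1
  refine le_of_forall_pos_le_add fun ε hε => ?_
  obtain ⟨M, hM⟩ := hf.2
  have hM0 : 0 ≤ M := (abs_nonneg _).trans (hM 0)
  have hFM : ∀ x, |F x| ≤ M := Sop_abs_le hp hφ hμt t hM
  obtain ⟨δ, hδ, hmod⟩ := hf.modulus (ε := ε / 6) (by positivity)
  have hFmod := Sop_modulus hp hφ hμt t hf hmod
  obtain ⟨σ, hσ⟩ := exists_simple ν hνp hδ (η := ε / (8 * (M + 1))) (by positivity)
  set B : Set (Ed d) := {y | δ ≤ dist (σ y) y} with hB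
  have hBm : MeasurableSet B :=
    measurableSet_le measurable_const (σ.measurable.dist measurable_id)
  have hex : ∀ v, ∃ κ : Measure (Ed d), MemPp p κ ∧ ∃ C : ℝ, 0 ≤ C ∧
      phit φ t (Wp p μt κ).toNNReal ≤ ENNReal.ofReal C ∧
      F (x + v) - ε / 6 < (∫ z, f (x + v + z) ∂κ) - C := by
    intro v
    have hlt : F (x + v) - ε / 6 < sSup (SopSet p φ μt t f (x + v)) := by
      change F (x + v) - ε / 6 < F (x + v)
      linarith
    obtain ⟨r, ⟨κ, hκ, C, hC0, hC, rfl⟩, hr⟩ :=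
      exists_lt_of_lt_csSup ⟨_, SopSet_mem hp hφ hμt t f (x + v)⟩ hlt
    exact ⟨κ, hκ, C, hC0, hC, hr⟩
  choose κ hκ C hC0 hC hr using hex
  have hκp := fun v => (hκ v).1
  have hmem : (∫ y, f (x + y) ∂(mix σ ν κ)) - (c + ∑ v ∈ σ.range, ν.real (σ ⁻¹' {v}) * C v) ≤
      Sop p φ (μs.conv μt) (s + t) f x := by
    refine le_csSup (SopSet_bdd hf x) ⟨mix σ ν κ, mix_memPp hp σ hν hκ, _, ?_,
      phit_mix hp hφ hs ht σ hμs hμt hν hκ hc0 hc hC0 hC, rfl⟩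
    exact add_nonneg hc0 (Finset.sum_nonneg fun v _ => mul_nonneg measureReal_nonneg (hC0 v))
  have hfc := hf.1.continuous
  rw [mix_integral σ hνp hκp (f := fun y => f (x + y)) (by fun_prop) (fun y => hM _)] at hmem
  -- the error function
  set e : Ed d → ℝ := fun y => ε / 6 + 2 * M * B.indicator (fun _ => (1 : ℝ)) y with he
  have heI : Integrable e ν := by
    refine (integrable_const _).add (Integrable.const_mul ?_ _)
    exact (integrable_const (1 : ℝ)).indicator hBm
  have hint_e : ∫ y, e y ∂ν = ε / 6 + 2 * M * ν.real B := by
    rw [he, integral_add (integrable_const _)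
      (((integrable_const (1 : ℝ)).indicator hBm).const_mul _), integral_const_mul,
      integral_indicator_const _ hBm]
    simp
  have hpt : ∀ y, F (x + y) ≤ (∫ z, f (x + (y + z)) ∂(κ (σ y))) - C (σ y) + (ε / 6 + 2 * e y) := by
    intro y
    have hcl : ∀ g : Ed d → ℝ, (∀ x, |g x| ≤ M) →
        (∀ x y : Ed d, ‖x - y‖ ≤ δ → |g x - g y| ≤ ε / 6) → ∀ a b : Ed d, a - b = σ y - y →
        |g a - g b| ≤ e y := by
      intro g h1 h2 a b hab
      by_cases hy : y ∈ B
      · have h3 := abs_sub (g a) (g b)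
        have h4 := h1 a
        have h5 := h1 b
        simp only [he, Set.indicator_of_mem hy]
        linarith
      · simp only [he, Set.indicator_of_notMem hy]
        have h3 : ‖a - b‖ ≤ δ := by
          rw [hab, ← dist_eq_norm]
          exact (not_le.1 hy).le
        have := h2 a b h3
        linarith
    have h1 := (abs_le.1 (hcl F hFM hFmod (x + σ y) (x + y) (by abel))).1
    have h2 := hr (σ y)
    have h3 : (∫ z, f (x + σ y + z) ∂(κ (σ y))) ≤ (∫ z, f (x + (y + z)) ∂(κ (σ y))) + e y := by
      have hi : Integrable (fun z => f (x + (y + z))) (κ (σ y)) := by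
        simp only [← add_assoc]
        exact hf.integrable _ inferInstance (x + y)
      have h4 := integral_mono (hf.integrable (κ (σ y)) inferInstance (x + σ y))
        (hi.add (integrable_const (e y))) (fun z => by
          have := (abs_le.1 (hcl f hM hmod (x + σ y + z) (x + (y + z)) (by abel))).2
          simp only [Pi.add_apply]
          linarith)
      simp only [Pi.add_apply] at h4
      rw [integral_add hi (integrable_const _)] at h4
      simpa using h4
    linarith
  have hΦ : ∀ v, Integrable (fun y => ∫ z, f (x + (y + z)) ∂(κ v)) ν := fun v => by
    have : Integrable (fun q : Ed d × Ed d => f (x + (q.1 + q.2))) (ν.prod (κ v)) :=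
      Integrable.of_bound (by fun_prop) M (ae_of_all _ fun y => hM _)
    exact this.integral_prod_left
  have hsum : ∫ y, F (x + y) ∂ν ≤ (∑ v ∈ σ.range, ∫ y in σ ⁻¹' {v}, ∫ z, f (x + (y + z)) ∂(κ v) ∂ν) -
      (∑ v ∈ σ.range, ν.real (σ ⁻¹' {v}) * C v) + ∫ y, (ε / 6 + 2 * e y) ∂ν := by
    have hE : Integrable (fun y => ε / 6 + 2 * e y) ν := (integrable_const _).add (heI.const_mul 2)
    have hFI := hFB.integrable ν inferInstance x
    rw [← integral_sum_fiber σ ν hFI, ← integral_sum_fiber σ ν hE, ← Finset.sum_sub_distrib,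
      ← Finset.sum_add_distrib]
    refine Finset.sum_le_sum fun v _ => ?_
    have hA := σ.measurableSet_fiber v
    have h1 : Integrable (fun y => (∫ z, f (x + (y + z)) ∂(κ v)) - C v) (ν.restrict (σ ⁻¹' {v})) :=
      (hΦ v).restrict.sub (integrable_const _)
    have h2 := setIntegral_mono_on hFI.restrict (h1.add hE.restrict) hA (fun y hy => by
      have := hpt y
      have hy' : σ y = v := hy
      rw [hy'] at this
      exact this)
    refine h2.trans (le_of_eq ?_)
    rw [integral_add' h1 hE.restrict, integral_sub (hΦ v).restrict (integrable_const _)]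
    simp
  have hE2 : ∫ y, (ε / 6 + 2 * e y) ∂ν = ε / 2 + 4 * M * ν.real B := by
    rw [integral_add (integrable_const _) (heI.const_mul 2), integral_const_mul, hint_e]
    simp
    ring
  have hfin : 4 * M * ν.real B ≤ ε / 2 := by
    calc 4 * M * ν.real B ≤ 4 * (M + 1) * (ε / (8 * (M + 1))) := by gcongr; linarith
      _ = ε / 2 := by field_simp; ring
  linarith

lemma BUC.iterate {d : ℕ} {p : ℝ} (hp : 1 < p) {φ : ℝ≥0 → ℝ≥0∞} (hφ : IsPenalty p φ)
    {μt : Measure (Ed d)} (hμ : MemPp p μt) (t : ℝ) {f : Ed d → ℝ} (hf : BUC f) (k : ℕ) :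
    BUC ((fun g => _root_.Sop p φ μt t g)^[k] f) := by
  induction k with
  | zero => exact hf
  | succ k ih =>
    rw [Function.iterate_succ_apply']
    exact ih.Sop hp hφ hμ t

lemma iterate_contr {d : ℕ} {p : ℝ} (hp : 1 < p) {φ : ℝ≥0 → ℝ≥0∞} (hφ : IsPenalty p φ)
    {μt : Measure (Ed d)} (hμ : MemPp p μt) (t : ℝ) {f g : Ed d → ℝ} (hf : BUC f) (hg : BUC g)
    {C : ℝ} (h : ∀ x, f x ≤ g x + C) (k : ℕ) (x : Ed d) :
    (fun g => Sop p φ μt t g)^[k] f x ≤ (fun g => Sop p φ μt t g)^[k] g x + C := by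
  induction k generalizing x with
  | zero => exact h x
  | succ k ih =>
    rw [Function.iterate_succ_apply', Function.iterate_succ_apply']
    exact Sop_le hp hφ hμ t (hf.iterate hp hφ hμ t k) (hg.iterate hp hφ hμ t k) fun z => ih _

lemma iterate_modulus {d : ℕ} {p : ℝ} (hp : 1 < p) {φ : ℝ≥0 → ℝ≥0∞} (hφ : IsPenalty p φ)
    {μt : Measure (Ed d)} (hμ : MemPp p μt) (t : ℝ) {f : Ed d → ℝ} (hf : BUC f) {ε δ : ℝ}
    (h : ∀ x y : Ed d, ‖x - y‖ ≤ δ → |f x - f y| ≤ ε) (k : ℕ) (x y : Ed d) (hxy : ‖x - y‖ ≤ δ) :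
    |(fun g => Sop p φ μt t g)^[k] f x - (fun g => Sop p φ μt t g)^[k] f y| ≤ ε := by
  induction k generalizing x y with
  | zero => exact h x y hxy
  | succ k ih =>
    rw [Function.iterate_succ_apply']
    exact Sop_modulus hp hφ hμ t (hf.iterate hp hφ hμ t k) ih x y hxy

lemma iterate_double {d : ℕ} {p : ℝ} (hp : 1 < p) {φ : ℝ≥0 → ℝ≥0∞} (hφ : IsPenalty p φ)
    {μ : ℝ → Measure (Ed d)} (hμ : IsConvSemigroup p μ) {a b : ℝ} (ha : 0 < a) (hab : a + a = b)
    {f g : Ed d → ℝ} (hf : BUC f) (hg : BUC g)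
    (h : ∀ x, f x ≤ g x) (k : ℕ) (x : Ed d) :
    (fun g => Sop p φ (μ a) a g)^[2 * k] f x ≤ (fun g => Sop p φ (μ b) b g)^[k] g x := by
  have hμa := hμ.2.2 a ha.le
  have hμb := hμ.2.2 b (by linarith)
  induction k generalizing x with
  | zero => exact h x
  | succ k ih =>
    rw [show 2 * (k + 1) = 2 * k + 1 + 1 by ring, Function.iterate_succ_apply',
      Function.iterate_succ_apply', Function.iterate_succ_apply']
    have h1 := hf.iterate hp hφ hμa a (2 * k)
    have h2 := hg.iterate hp hφ hμb b k
    generalize (fun g => Sop p φ (μ a) a g)^[2 * k] f = u at *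
    generalize (fun g => Sop p φ (μ b) b g)^[k] g = w at *
    have h3 : ∀ x, Sop p φ (μ a) a u x ≤ Sop p φ (μ a) a w x := fun x => by
      have := Sop_le hp hφ hμa a h1 h2 (x := x) (x' := x) (C := 0) (fun z => by simpa using ih _)
      simpa using this
    have h4 := Sop_le hp hφ hμa a (h1.Sop hp hφ hμa a) (h2.Sop hp hφ hμa a) (x := x) (x' := x)
      (C := 0) (fun z => by simpa using h3 _)
    have h5 := Sop_comp hp hφ hμa hμa ha ha.le h2 x
    rw [← hμ.2.1 a a ha.le ha.le, hab] at h5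
    linarith

lemma buc_C0 {d : ℕ} (f : C₀(Ed d, ℝ)) : BUC (⇑f) := by
  refine ⟨ZeroAtInftyContinuousMap.uniformContinuous f, ‖f‖, fun x => ?_⟩
  have := f.toBCF.norm_coe_le_norm x
  exact this

/-- monotonicity in `n`, contractivity, and preservation of the modulus of
continuity for the iterated operators `𝒮ⁿ(t)`. -/
theorem stmt_6 (d : ℕ) (hd : 1 ≤ d) (p : ℝ) (hp : 1 < p)
    (φ : ℝ≥0 → ℝ≥0∞) (hφ : IsPenalty p φ)
    (μ : ℝ → Measure (Ed d)) (hμ : IsConvSemigroup p μ)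
    (f g : C₀(Ed d, ℝ)) (t : ℝ) (ht : 0 ≤ t) (n : ℕ) :
    (∀ x, SiterN p φ μ (n + 1) t (⇑f) x ≤ SiterN p φ μ n t (⇑f) x) ∧
    (∀ x, |SiterN p φ μ n t (⇑f) x - SiterN p φ μ n t (⇑g) x| ≤ ‖f - g‖) ∧
    (∀ ε δ : ℝ, 0 < ε → 0 < δ →
      (∀ x y : Ed d, ‖x - y‖ ≤ δ → |f x - f y| ≤ ε) →
      ∀ x y : Ed d, ‖x - y‖ ≤ δ →
        |SiterN p φ μ n t (⇑f) x - SiterN p φ μ n t (⇑f) y| ≤ ε) := by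
  have hrem : ∀ m : ℕ, 0 ≤ t - ⌊(2:ℝ)^m * t⌋₊ * ((2:ℝ)^m)⁻¹ := by
    intro m
    have h1 : (⌊(2:ℝ)^m * t⌋₊ : ℝ) ≤ (2:ℝ)^m * t := Nat.floor_le (by positivity)
    rw [sub_nonneg, ← div_eq_mul_inv, div_le_iff₀ (by positivity)]
    linarith
  have hh : ∀ m : ℕ, 0 < ((2:ℝ)^m)⁻¹ := fun m => by positivity
  have hf := buc_C0 f
  have hg := buc_C0 g
  have hμh := hμ.2.2 _ (hh n).le
  have hμr := hμ.2.2 _ (hrem n)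
  refine ⟨?_, ?_, ?_⟩
  · intro x
    unfold SiterN
    set k := ⌊(2:ℝ)^n * t⌋₊ with hk
    set a := ((2:ℝ)^(n+1))⁻¹ with ha
    set b := ((2:ℝ)^n)⁻¹ with hb
    have ha0 : 0 < a := hh (n + 1)
    have hab : a + a = b := by
      rw [ha, hb, pow_succ]; field_simp; norm_num
    have hμa := hμ.2.2 a ha0.le
    have hfl : (⌊(2:ℝ)^(n+1) * t⌋₊ = 2 * k) ∨ (⌊(2:ℝ)^(n+1) * t⌋₊ = 2 * k + 1) := by
      have h1 : (k : ℝ) ≤ (2:ℝ)^n * t := Nat.floor_le (by positivity)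
      have h2 : (2:ℝ)^n * t < k + 1 := Nat.lt_floor_add_one _
      have h3 : 2 * k ≤ ⌊(2:ℝ)^(n+1) * t⌋₊ := by
        apply Nat.le_floor
        push_cast
        rw [pow_succ]; linarith
      have h4 : ⌊(2:ℝ)^(n+1) * t⌋₊ < 2 * k + 2 := by
        rw [Nat.floor_lt (by positivity)]
        push_cast
        rw [pow_succ]; linarith
      omega
    have hra := hrem (n + 1)
    rcases hfl with h | h
    · rw [h] at hra ⊢
      have e : t - ((2 * k : ℕ) : ℝ) * a = t - k * b := by rw [← hab]; push_cast; ring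
      rw [e]
      exact iterate_double hp hφ hμ ha0 hab (hf.Sop hp hφ hμr _) (hf.Sop hp hφ hμr _)
        (fun x => le_rfl) k x
    · rw [h] at hra ⊢
      rw [← ha] at hra
      have e : a + (t - ((2 * k + 1 : ℕ) : ℝ) * a) = t - k * b := by rw [← hab]; push_cast; ring
      set r := t - ((2 * k + 1 : ℕ) : ℝ) * a with hr
      have hμr' := hμ.2.2 r hra
      rw [Function.iterate_succ_apply]
      refine iterate_double hp hφ hμ ha0 hab ((hf.Sop hp hφ hμr' _).Sop hp hφ hμa _)
        (hf.Sop hp hφ hμr _) (fun x => ?_) k x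
      have := Sop_comp hp hφ hμa hμr' ha0 hra hf x
      rwa [← hμ.2.1 a r ha0.le hra, e] at this
  · have hd1 : ∀ x, |f x - g x| ≤ ‖f - g‖ := fun x => (f - g).toBCF.norm_coe_le_norm x
    intro x
    unfold SiterN
    have h1 := iterate_contr hp hφ hμh ((2:ℝ)^n)⁻¹ (hf.Sop hp hφ hμr (t - ⌊(2:ℝ)^n * t⌋₊ * ((2:ℝ)^n)⁻¹))
      (hg.Sop hp hφ hμr (t - ⌊(2:ℝ)^n * t⌋₊ * ((2:ℝ)^n)⁻¹))
      (C := ‖f - g‖) (fun x => Sop_le hp hφ hμr _ hf hg fun z => by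
        have := (abs_le.1 (hd1 (x + z))).2
        linarith) ⌊(2:ℝ)^n * t⌋₊ x
    have h2 := iterate_contr hp hφ hμh ((2:ℝ)^n)⁻¹ (hg.Sop hp hφ hμr (t - ⌊(2:ℝ)^n * t⌋₊ * ((2:ℝ)^n)⁻¹))
      (hf.Sop hp hφ hμr (t - ⌊(2:ℝ)^n * t⌋₊ * ((2:ℝ)^n)⁻¹))
      (C := ‖f - g‖) (fun x => Sop_le hp hφ hμr _ hg hf fun z => by
        have := (abs_le.1 (hd1 (x + z))).1
        linarith) ⌊(2:ℝ)^n * t⌋₊ x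
    rw [abs_le]
    constructor <;> linarith
  · intro ε δ _ _ h x y hxy
    exact iterate_modulus hp hφ hμh _ (hf.Sop hp hφ hμr _) (Sop_modulus hp hφ hμr _ hf h) _ x y hxy
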